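/- arXiv:1003.4564 — 3 statements merged into one kernel-verified Lean document; each statement's English description precedes it below -/
import Mathlib

section
/- For all n ≥ 3 and all k with 2 ≤ k ≤ n, there is a bijection between T_{n,k} and the disjoint union of T_{n,k-1} with the disjoint union over i = k+1, …, n of the sets T_{n-2,i-2}. -/
/-!
Both sides are finite, so it suffices to compare cardinalities. A 0-1-2 increasing tree is built by
attaching the vertices `2, 3, …` in turn to vertices with at most one child. A new vertex is the
largest so far, so it changes the main-chain leaf only when it is attached to that leaf, and then it
becomes the new main-chain leaf (`mcLeafVal_ext`). Hence `p(T) = k` means that `k` was attached to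
the main-chain leaf of a tree on `[k-1]` and that no later vertex was attached to `k`.

The number of ways to continue depends only on the number `a` of available childless vertices and
the number `b` of vertices with one child: call it `W_r(a,b)` for `r` further vertices
(`growCount`). It satisfies `W_{r+1}(a,b) = a W_r(a,b+1) + b W_r(a+1,b-1)`. For `k ≥ 3` and
`r = n - k`, every term of the recurrence becomes a sum over trees on `[k-2]`, with `a`, `b` the
numbers of vertices with zero and one child:

* `|T_{n,k}|` sums `a W_r(a-1,b+2) + b W_r(a,b)`;
* `|T_{n,k-1}|` sums `(a-1) W_r(a-1,b+2) + (b+1) W_r(a,b)`;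
* the number of trees on `[n-2]` with main-chain leaf larger than `k-2` sums
  `W_r(a,b) - W_r(a-1,b)`.

The recurrence thus holds term by term, by the identity
`W_r(a-1,b+2) + W_r(a-1,b) = 2 W_r(a,b)` (`growCount_add`), an induction on `r`. The case `k = 2`
has no tree on `[k-2]` to sum over and is read off from the one-vertex tree.
-/

/-- A permutation `π` of `Fin n` is (down-up) alternating:
`π₁ > π₂ < π₃ > π₄ < ⋯` (0-indexed: `π 0 > π 1 < π 2 > ⋯`). -/
def IsAltPerm (n : ℕ) (π : Equiv.Perm (Fin n)) : Prop :=
  ∀ i : ℕ, ∀ h : i + 1 < n,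
    if i % 2 = 0 then π ⟨i + 1, h⟩ < π ⟨i, Nat.lt_of_succ_lt h⟩
    else π ⟨i, Nat.lt_of_succ_lt h⟩ < π ⟨i + 1, h⟩

/-- The first entry of a permutation of `[n]`, as a 1-based value in `[n]`. -/
def firstEntry {n : ℕ} (π : Equiv.Perm (Fin n)) : ℕ :=
  if h : 0 < n then (π ⟨0, h⟩ : ℕ) + 1 else 0

/-- `f` encodes a 0-1-2 increasing tree on `[n]` (vertices `0,…,n-1` standing for
`1,…,n`): the root `0` is a fixed point of `f`, every non-root vertex has a strictly
smaller parent, and every vertex has at most two children. -/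
def IsIncTree (n : ℕ) (f : Fin n → Fin n) : Prop :=
  (∀ i : Fin n, (i : ℕ) = 0 → f i = i) ∧
  (∀ i : Fin n, (i : ℕ) ≠ 0 → (f i : ℕ) < (i : ℕ)) ∧
  (∀ j : Fin n,
    (Finset.univ.filter fun i : Fin n => (i : ℕ) ≠ 0 ∧ f i = j).card ≤ 2)

/-- One step along the main chain: move from `j` to its smallest child
(if `j` has any child), otherwise stay at `j`. -/
def mcStep (n : ℕ) (f : Fin n → Fin n) (j : Fin n) : Fin n :=
  let s := Finset.univ.filter fun i : Fin n => (i : ℕ) ≠ 0 ∧ f i = j ∧ j < i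
  if h : s.Nonempty then s.min' h else j

/-- The main-chain leaf `p(T)` of the increasing tree encoded by `f`, as a
1-based value in `[n]`: start at the root and repeatedly move to the smallest
child until reaching a leaf. -/
def mcLeafVal {n : ℕ} (f : Fin n → Fin n) : ℕ :=
  if h : 0 < n then (((mcStep n f)^[n]) ⟨0, h⟩ : ℕ) + 1 else 0

/-! ### Statistics on trees and the growth count -/

open Finset in
/-- Number of children of `v` in the tree encoded by `f`. -/
def childCount {n : ℕ} (f : Fin n → Fin n) (v : Fin n) : ℕ :=
  #{i : Fin n | (i : ℕ) ≠ 0 ∧ f i = v}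

open Finset in
/-- Number of vertices with exactly `d` children; `d = 0` counts leaves. -/
def degCount {n : ℕ} (f : Fin n → Fin n) (d : ℕ) : ℕ :=
  #{v : Fin n | childCount f v = d}

open Classical in
/-- The finite set of 0-1-2 increasing trees on `m + 1` vertices. -/
noncomputable def incTrees (m : ℕ) : Finset (Fin (m + 1) → Fin (m + 1)) :=
  Finset.univ.filter (IsIncTree (m + 1))

lemma mem_incTrees {m : ℕ} {f : Fin (m + 1) → Fin (m + 1)} :
    f ∈ incTrees m ↔ IsIncTree (m + 1) f := by
  simp [incTrees]

/-- The tree obtained from `f` by attaching a new largest vertex as a child of `j`. -/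
def extTree {m : ℕ} (f : Fin (m + 1) → Fin (m + 1)) (j : Fin (m + 1)) :
    Fin (m + 2) → Fin (m + 2) :=
  Fin.snoc (α := fun _ => Fin (m + 2)) (fun i => (f i).castSucc) j.castSucc

/-- The main-chain leaf as a vertex. -/
def mcLeaf {m : ℕ} (f : Fin (m + 1) → Fin (m + 1)) : Fin (m + 1) :=
  (mcStep (m + 1) f)^[m + 1] 0

/-- `growCount r a b` is the number of ways to attach `r` further vertices, one after the other,
to a configuration with `a` childless vertices and `b` vertices with one child. In the second
summand the truncated `b - 1` is harmless because of the factor `b`. -/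
def growCount : ℕ → ℕ → ℕ → ℕ
  | 0, _, _ => 1
  | r + 1, a, b => a * growCount r a (b + 1) + b * growCount r (a + 1) (b - 1)

/-- At the level of generating functions this is `(1 + S)² + 1 = 2 (1 + S + S² / 2)`, where
`1 + S` and `1 + S + S² / 2` account for what can grow below a vertex with one free slot and
below a vertex with two free slots. -/
lemma growCount_add (r : ℕ) : ∀ a b : ℕ,
    growCount r a (b + 2) + growCount r a b = 2 * growCount r (a + 1) b := by
  induction r with
  | zero => intro a b; rfl
  | succ r ih =>
    intro a b
    have h1 := ih a (b + 1)
    cases b with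
    | zero =>
      simp only [growCount]
      simp only [Nat.zero_add, Nat.reduceAdd, Nat.add_one_sub_one, Nat.reduceSub, Nat.zero_mul,
        Nat.add_zero] at *
      linear_combination a * h1
    | succ b =>
      have h2 := ih (a + 1) b
      simp only [growCount, Nat.add_sub_cancel]
      have e : b + 1 + 2 - 1 = b + 2 := by omega
      rw [e]
      linear_combination a * h1 + (b + 1) * h2

/-! ### The main chain -/

lemma mcStep_eq_of_min {n : ℕ} {f : Fin n → Fin n} {v w : Fin n} (h0 : (w : ℕ) ≠ 0)
    (h1 : f w = v) (h2 : v < w)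
    (h3 : ∀ i : Fin n, (i : ℕ) ≠ 0 → f i = v → v < i → w ≤ i) : mcStep n f v = w := by
  have hw : w ∈ Finset.univ.filter fun i : Fin n => (i : ℕ) ≠ 0 ∧ f i = v ∧ v < i := by
    simp [h0, h1, h2]
  simp only [mcStep]
  rw [dif_pos ⟨w, hw⟩]
  apply le_antisymm (Finset.min'_le _ _ hw)
  apply Finset.le_min'
  intro y hy
  simp only [Finset.mem_filter, Finset.mem_univ, true_and] at hy
  exact h3 y hy.1 hy.2.1 hy.2.2

lemma mcStep_eq_self {n : ℕ} {f : Fin n → Fin n} {v : Fin n}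
    (h : ∀ i : Fin n, (i : ℕ) ≠ 0 → f i = v → ¬ v < i) : mcStep n f v = v := by
  simp only [mcStep]
  rw [dif_neg]
  rintro ⟨y, hy⟩
  simp only [Finset.mem_filter, Finset.mem_univ, true_and] at hy
  exact h y hy.1 hy.2.1 hy.2.2

lemma mcStep_cases {n : ℕ} (f : Fin n → Fin n) (v : Fin n) :
    (mcStep n f v = v ∧ ∀ i : Fin n, (i : ℕ) ≠ 0 → f i = v → ¬ v < i) ∨
    ∃ w, mcStep n f v = w ∧ (w : ℕ) ≠ 0 ∧ f w = v ∧ v < w ∧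
      ∀ i : Fin n, (i : ℕ) ≠ 0 → f i = v → v < i → w ≤ i := by
  by_cases h : ∀ i : Fin n, (i : ℕ) ≠ 0 → f i = v → ¬ v < i
  · exact Or.inl ⟨mcStep_eq_self h, h⟩
  · right
    push Not at h
    obtain ⟨y, h0, h1, h2⟩ := h
    have hne : (Finset.univ.filter fun i : Fin n => (i : ℕ) ≠ 0 ∧ f i = v ∧ v < i).Nonempty :=
      ⟨y, by simp [h0, h1, h2]⟩
    have hm := Finset.min'_mem _ hne
    refine ⟨mcStep n f v, rfl, ?_⟩
    have e : mcStep n f v = Finset.min' _ hne := by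
      simp only [mcStep]; rw [dif_pos hne]
    rw [e]
    refine ⟨(Finset.mem_filter.1 hm).2.1, (Finset.mem_filter.1 hm).2.2.1,
      (Finset.mem_filter.1 hm).2.2.2, ?_⟩
    intro i a b c
    exact Finset.min'_le _ _ (by simp [a, b, c])

lemma mcStep_mcLeaf {m : ℕ} (f : Fin (m + 1) → Fin (m + 1)) :
    mcStep (m + 1) f (mcLeaf f) = mcLeaf f := by
  -- a chain that is not yet stationary after `t` steps has climbed to a label at least `t`
  have key : ∀ t : ℕ,
      mcStep (m + 1) f ((mcStep (m + 1) f)^[t] 0) = (mcStep (m + 1) f)^[t] 0 ∨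
        t ≤ ((mcStep (m + 1) f)^[t] 0 : Fin (m + 1)).val := by
    intro t
    induction t with
    | zero => right; simp
    | succ t ih =>
      rw [Function.iterate_succ_apply']
      rcases ih with h | h
      · left; rw [h, h]
      · rcases mcStep_cases f ((mcStep (m + 1) f)^[t] 0) with ⟨h1, -⟩ | ⟨w, h1, -, -, h2, -⟩
        · left; rw [h1, h1]
        · right; rw [h1]; have := Fin.lt_def.1 h2; omega
  rcases key (m + 1) with h | h
  · exact h
  · have := ((mcStep (m + 1) f)^[m + 1] 0 : Fin (m + 1)).isLt
    omega

/-- Any stationary vertex met by the chain, after however many steps, is its end. -/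
lemma mcLeaf_eq {m : ℕ} {f : Fin (m + 1) → Fin (m + 1)} {v : Fin (m + 1)} {t : ℕ}
    (h1 : (mcStep (m + 1) f)^[t] 0 = v) (h2 : mcStep (m + 1) f v = v) : mcLeaf f = v := by
  have a : (mcStep (m + 1) f)^[m + 1 + t] 0 = v := by
    rw [Function.iterate_add_apply, h1]; exact Function.iterate_fixed h2 _
  have b : (mcStep (m + 1) f)^[t + (m + 1)] 0 = mcLeaf f := by
    rw [Function.iterate_add_apply]; exact Function.iterate_fixed (mcStep_mcLeaf f) _
  rw [Nat.add_comm (m + 1) t] at a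
  exact b.symm.trans a

lemma mcLeafVal_eq {m : ℕ} (f : Fin (m + 1) → Fin (m + 1)) :
    mcLeafVal f = (mcLeaf f : ℕ) + 1 := by
  simp [mcLeafVal, mcLeaf]

lemma childCount_mcLeaf {m : ℕ} {f : Fin (m + 1) → Fin (m + 1)} (hf : IsIncTree (m + 1) f) :
    childCount f (mcLeaf f) = 0 := by
  rw [childCount, Finset.card_eq_zero, Finset.filter_eq_empty_iff]
  rintro i - ⟨h0, h1⟩
  have h2 := hf.2.1 i h0
  rw [h1] at h2
  rcases mcStep_cases f (mcLeaf f) with ⟨-, h⟩ | ⟨w, h, -, -, h', -⟩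
  · exact h i h0 h1 h2
  · rw [mcStep_mcLeaf] at h; exact absurd h h'.ne

/-! ### Attaching a largest vertex -/

@[simp] lemma extTree_castSucc {m : ℕ} (f : Fin (m + 1) → Fin (m + 1)) (j i : Fin (m + 1)) :
    extTree f j i.castSucc = (f i).castSucc := by
  simp [extTree]

@[simp] lemma extTree_last {m : ℕ} (f : Fin (m + 1) → Fin (m + 1)) (j : Fin (m + 1)) :
    extTree f j (Fin.last _) = j.castSucc := by
  simp [extTree]

lemma childCount_ext_castSucc {m : ℕ} (f : Fin (m + 1) → Fin (m + 1)) (j v : Fin (m + 1)) :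
    childCount (extTree f j) v.castSucc = childCount f v + if j = v then 1 else 0 := by
  simp only [childCount, Finset.card_filter]
  rw [Fin.sum_univ_castSucc]
  simp

lemma childCount_ext_last {m : ℕ} (f : Fin (m + 1) → Fin (m + 1)) (j : Fin (m + 1)) :
    childCount (extTree f j) (Fin.last _) = 0 := by
  simp only [childCount, Finset.card_filter]
  rw [Fin.sum_univ_castSucc]
  simp [Fin.castSucc_ne_last]

lemma isIncTree_ext {m : ℕ} {f : Fin (m + 1) → Fin (m + 1)} {j : Fin (m + 1)} :
    IsIncTree (m + 2) (extTree f j) ↔ IsIncTree (m + 1) f ∧ childCount f j ≤ 1 := by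
  constructor
  · rintro ⟨h0, h1, h2⟩
    have h2' : ∀ v, childCount (extTree f j) v ≤ 2 := h2
    refine ⟨⟨?_, ?_, ?_⟩, ?_⟩
    · intro i hi
      simpa using h0 i.castSucc (by simpa using hi)
    · intro i hi
      simpa using h1 i.castSucc (by simpa using hi)
    · intro v
      have := h2' v.castSucc
      rw [childCount_ext_castSucc] at this
      exact le_trans (Nat.le_add_right _ _) this
    · have := h2' j.castSucc
      rw [childCount_ext_castSucc, if_pos rfl] at this
      omega
  · rintro ⟨⟨h0, h1, h2⟩, hj⟩
    have h2' : ∀ v, childCount f v ≤ 2 := h2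
    refine ⟨?_, ?_, ?_⟩
    · intro i
      refine Fin.lastCases ?_ (fun i => ?_) i
      · simp
      · intro hi
        simpa using h0 i (by simpa using hi)
    · intro i
      refine Fin.lastCases ?_ (fun i => ?_) i
      · intro _
        rw [extTree_last]; simp only [Fin.val_castSucc, Fin.val_last]; omega
      · intro hi
        simpa using h1 i (by simpa using hi)
    · intro v
      change childCount (extTree f j) v ≤ 2
      refine Fin.lastCases ?_ (fun v => ?_) v
      · rw [childCount_ext_last]; omega
      · rw [childCount_ext_castSucc]
        split_ifs with h
        · subst h; omega
        · exact h2' v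

lemma exists_ext {m : ℕ} {g : Fin (m + 2) → Fin (m + 2)} (hg : IsIncTree (m + 2) g) :
    ∃ f j, g = extTree f j := by
  have h : ∀ i : Fin (m + 1), ∃ w : Fin (m + 1), g i.castSucc = w.castSucc := by
    intro i
    have : (g i.castSucc : ℕ) < m + 1 := by
      by_cases hi : (i : ℕ) = 0
      · rw [hg.1 i.castSucc (by simpa using hi)]; exact i.isLt
      · have := hg.2.1 i.castSucc (by simpa using hi)
        simp only [Fin.val_castSucc] at this
        omega
    exact ⟨⟨_, this⟩, by ext; simp⟩
  choose f hf using h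
  have hl : (g (Fin.last _) : ℕ) < m + 1 := by
    simpa using hg.2.1 (Fin.last _) (by simp)
  refine ⟨f, ⟨_, hl⟩, ?_⟩
  funext i
  refine Fin.lastCases ?_ (fun i => ?_) i
  · rw [extTree_last]; ext; simp
  · rw [extTree_castSucc, hf]

lemma extTree_inj {m : ℕ} {f f' : Fin (m + 1) → Fin (m + 1)} {j j' : Fin (m + 1)}
    (h : extTree f j = extTree f' j') : f = f' ∧ j = j' := by
  constructor
  · funext i
    have := congrFun h i.castSucc
    simpa using this
  · have := congrFun h (Fin.last _)
    simpa using this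

lemma mcStep_ext_of_ne {m : ℕ} {f : Fin (m + 1) → Fin (m + 1)} {j v : Fin (m + 1)}
    (hv : v ≠ j ∨ mcStep (m + 1) f v ≠ v) :
    mcStep (m + 2) (extTree f j) v.castSucc = (mcStep (m + 1) f v).castSucc := by
  rcases mcStep_cases f v with ⟨h1, h2⟩ | ⟨w, h1, h2, h3, h4, h5⟩
  · have hv' : v ≠ j := by
      rcases hv with h | h
      · exact h
      · exact absurd h1 h
    rw [h1]
    apply mcStep_eq_self
    intro i
    refine Fin.lastCases ?_ (fun i => ?_) i
    · intro _ h
      rw [extTree_last] at h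
      exact absurd (Fin.castSucc_injective _ h).symm hv'
    · intro hi h
      rw [extTree_castSucc] at h
      have := h2 i (by simpa using hi) (Fin.castSucc_injective _ h)
      simpa using this
  · rw [h1]
    apply mcStep_eq_of_min
    · simpa using h2
    · rw [extTree_castSucc, h3]
    · simpa using h4
    · intro i
      refine Fin.lastCases ?_ (fun i => ?_) i
      · intro _ _ _; exact Fin.le_last _
      · intro hi h h'
        rw [extTree_castSucc] at h
        have := h5 i (by simpa using hi) (Fin.castSucc_injective _ h) (by simpa using h')
        simpa using this

/-- Attaching the largest vertex moves the main-chain leaf only if it is attached to that leaf. -/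
lemma mcLeafVal_ext {m : ℕ} (f : Fin (m + 1) → Fin (m + 1)) (j : Fin (m + 1)) :
    mcLeafVal (extTree f j) = if j = mcLeaf f then m + 2 else mcLeafVal f := by
  -- every vertex on the chain of `f` stays on the chain of `extTree f j`
  have reach : ∀ t : ℕ, ∃ s : ℕ, (mcStep (m + 2) (extTree f j))^[s] 0 =
      ((mcStep (m + 1) f)^[t] 0).castSucc := by
    intro t
    induction t with
    | zero => exact ⟨0, by simp⟩
    | succ t ih =>
      obtain ⟨s, hs⟩ := ih
      rw [Function.iterate_succ_apply']
      by_cases h : mcStep (m + 1) f ((mcStep (m + 1) f)^[t] 0) = (mcStep (m + 1) f)^[t] 0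
      · exact ⟨s, by rw [h, hs]⟩
      · refine ⟨s + 1, ?_⟩
        rw [Function.iterate_succ_apply', hs, mcStep_ext_of_ne (Or.inr h)]
  obtain ⟨s, hs⟩ := reach (m + 1)
  change _ = (mcLeaf f).castSucc at hs
  split_ifs with hj
  · have hstep : mcStep (m + 2) (extTree f j) (mcLeaf f).castSucc = Fin.last _ := by
      apply mcStep_eq_of_min
      · simp
      · rw [extTree_last, hj]
      · exact Fin.castSucc_lt_last _
      · intro i
        refine Fin.lastCases ?_ (fun i => ?_) i
        · intro _ _ _; exact le_rfl
        · intro hi h h'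
          rw [extTree_castSucc] at h
          exfalso
          rcases mcStep_cases f (mcLeaf f) with ⟨-, h2⟩ | ⟨w, h1, -, -, h2, -⟩
          · exact h2 i (by simpa using hi) (Fin.castSucc_injective _ h) (by simpa using h')
          · rw [mcStep_mcLeaf] at h1; exact absurd h1 h2.ne
    have : mcLeaf (extTree f j) = Fin.last _ := by
      apply mcLeaf_eq (t := s + 1)
      · rw [Function.iterate_succ_apply', hs, hstep]
      · apply mcStep_eq_self
        intro i _ _ h
        exact absurd h (not_lt.2 (Fin.le_last _))
    rw [mcLeafVal_eq, this]; simp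
  · have : mcLeaf (extTree f j) = (mcLeaf f).castSucc := by
      apply mcLeaf_eq hs
      rw [mcStep_ext_of_ne (Or.inl (Ne.symm hj)), mcStep_mcLeaf]
    rw [mcLeafVal_eq, this, mcLeafVal_eq]; simp

lemma degCount_ext {m : ℕ} (f : Fin (m + 1) → Fin (m + 1)) (j : Fin (m + 1)) (d : ℕ) :
    degCount (extTree f j) d + (if childCount f j = d then 1 else 0) =
      degCount f d + (if childCount f j + 1 = d then 1 else 0) + (if d = 0 then 1 else 0) := by
  simp only [degCount, Finset.card_filter]
  rw [Fin.sum_univ_castSucc, childCount_ext_last]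
  simp only [childCount_ext_castSucc]
  rw [← Finset.add_sum_erase _ _ (Finset.mem_univ j),
    ← Finset.add_sum_erase _ _ (Finset.mem_univ j)]
  have : ∀ x ∈ Finset.univ.erase j,
      (if (childCount f x + if j = x then 1 else 0) = d then 1 else 0) =
        if childCount f x = d then 1 else 0 := by
    intro x hx
    rw [if_neg (c := j = x) (Finset.ne_of_mem_erase hx).symm, Nat.add_zero]
  rw [Finset.sum_congr rfl this]
  simp only [if_true, eq_comm (a := d)]
  ring

/-! ### Recursion for weighted sums over trees -/

open Finset in
lemma sum_incTrees_succ (m : ℕ) (Φ : (Fin (m + 2) → Fin (m + 2)) → ℕ) :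
    ∑ g ∈ incTrees (m + 1), Φ g =
      ∑ f ∈ incTrees m, ∑ j with childCount f j ≤ 1, Φ (extTree f j) := by
  rw [Finset.sum_sigma']
  symm
  apply Finset.sum_nbij (fun x => extTree x.1 x.2)
  · rintro ⟨f, j⟩ h
    simp only [mem_sigma, mem_filter, mem_univ, true_and, mem_incTrees] at h
    rw [mem_incTrees]
    exact isIncTree_ext.2 h
  · rintro ⟨f, j⟩ - ⟨f', j'⟩ - h
    obtain ⟨rfl, rfl⟩ := extTree_inj h
    rfl
  · intro g hg
    have hg' : IsIncTree (m + 2) g := mem_incTrees.1 hg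
    obtain ⟨f, j, rfl⟩ := exists_ext hg'
    refine ⟨⟨f, j⟩, ?_, rfl⟩
    simp only [coe_sigma, Set.mem_sigma_iff, mem_coe, mem_filter, mem_univ, true_and, mem_incTrees]
    exact isIncTree_ext.1 hg'
  · intros; rfl

lemma degCount_zero_pos {m : ℕ} {f : Fin (m + 1) → Fin (m + 1)} (hf : f ∈ incTrees m) :
    0 < degCount f 0 :=
  Finset.card_pos.2 ⟨mcLeaf f, by simp [childCount_mcLeaf (mem_incTrees.1 hf)]⟩

open Finset in
/-- Attaching vertex `m + 2` to the main-chain leaf, to one of the other leaves, or to a vertex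
with one child gives the three summands. -/
lemma sum_incTrees_stat (m : ℕ) (Φ : ℕ → ℕ → ℕ → ℕ) :
    ∑ g ∈ incTrees (m + 1), Φ (mcLeafVal g) (degCount g 0) (degCount g 1) =
      ∑ f ∈ incTrees m, (Φ (m + 2) (degCount f 0) (degCount f 1 + 1) +
        (degCount f 0 - 1) * Φ (mcLeafVal f) (degCount f 0) (degCount f 1 + 1) +
        degCount f 1 * Φ (mcLeafVal f) (degCount f 0 + 1) (degCount f 1 - 1)) := by
  rw [sum_incTrees_succ]
  apply Finset.sum_congr rfl
  intro f hf
  have hleaf := childCount_mcLeaf (mem_incTrees.1 hf)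
  have hsplit : (univ.filter fun j => childCount f j ≤ 1) =
      (univ.filter fun j => childCount f j = 0) ∪ univ.filter fun j => childCount f j = 1 := by
    ext j
    simp only [mem_union, mem_filter, mem_univ, true_and]
    omega
  have hdisj : Disjoint (univ.filter fun j => childCount f j = 0)
      (univ.filter fun j => childCount f j = 1) := by
    rw [Finset.disjoint_filter]
    intro j _ h1 h2
    omega
  have hmem : mcLeaf f ∈ univ.filter fun j => childCount f j = 0 := by simp [hleaf]
  have e0 : ∀ j, childCount f j = 0 → degCount (extTree f j) 0 = degCount f 0 ∧
      degCount (extTree f j) 1 = degCount f 1 + 1 := by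
    intro j hj
    have h0 := degCount_ext f j 0
    have h1 := degCount_ext f j 1
    simp only [hj] at h0 h1
    norm_num at h0 h1
    exact ⟨h0, h1⟩
  have e1 : ∀ j, childCount f j = 1 → degCount (extTree f j) 0 = degCount f 0 + 1 ∧
      degCount (extTree f j) 1 = degCount f 1 - 1 := by
    intro j hj
    have h0 := degCount_ext f j 0
    have h1 := degCount_ext f j 1
    simp only [hj] at h0 h1
    norm_num at h0 h1
    exact ⟨h0, by omega⟩
  rw [hsplit, Finset.sum_union hdisj, ← Finset.add_sum_erase _ _ hmem]
  congr 1
  · congr 1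
    · rw [mcLeafVal_ext, if_pos rfl, (e0 _ hleaf).1, (e0 _ hleaf).2]
    · rw [Finset.sum_congr rfl (g := fun _ =>
        Φ (mcLeafVal f) (degCount f 0) (degCount f 1 + 1))]
      · rw [Finset.sum_const, Finset.card_erase_of_mem hmem, smul_eq_mul]; rfl
      · intro j hj
        have hj' := (mem_filter.1 (mem_of_mem_erase hj)).2
        rw [mcLeafVal_ext, if_neg (ne_of_mem_erase hj), (e0 _ hj').1, (e0 _ hj').2]
  · rw [Finset.sum_congr rfl (g := fun _ =>
        Φ (mcLeafVal f) (degCount f 0 + 1) (degCount f 1 - 1))]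
    · rw [Finset.sum_const, smul_eq_mul]; rfl
    · intro j hj
      have hj' := (mem_filter.1 hj).2
      have hne : j ≠ mcLeaf f := by
        rintro rfl
        omega
      rw [mcLeafVal_ext, if_neg hne, (e1 _ hj').1, (e1 _ hj').2]

/-- Once the main-chain leaf is in `P` and no later label is, it must stay childless, so it is
removed from the leaves available for growth. -/
lemma sum_growCount_iterate (P : ℕ → Prop) [DecidablePred P] (m r : ℕ) :
    ∀ t : ℕ, (∀ s, m + 1 < s → s ≤ m + r + 1 → ¬ P s) →
    ∑ g ∈ incTrees (m + r),
        (if P (mcLeafVal g) then growCount t (degCount g 0 - 1) (degCount g 1) else 0) =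
      ∑ f ∈ incTrees m,
        (if P (mcLeafVal f) then growCount (t + r) (degCount f 0 - 1) (degCount f 1) else 0) := by
  induction r with
  | zero => intro t _; rfl
  | succ r ih =>
    intro t hP
    have h := sum_incTrees_stat (m + r)
      (fun p a b => if P p then growCount t (a - 1) b else 0)
    rw [← Nat.add_assoc, h]
    have e : t + (r + 1) = (t + 1) + r := by omega
    rw [e, ← ih (t + 1) (fun s h1 h2 => hP s h1 (by omega))]
    apply Finset.sum_congr rfl
    intro f hf
    have hpos := degCount_zero_pos hf
    rw [if_neg (hP (m + r + 2) (by omega) (by omega))]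
    split_ifs with hp
    · have : degCount f 0 - 1 + 1 = degCount f 0 := by omega
      simp only [growCount, this, Nat.add_sub_cancel, Nat.zero_add]
    · simp

lemma card_eq_sum_growCount (P : ℕ → Prop) [DecidablePred P] (m r : ℕ)
    (hP : ∀ s, m + 1 < s → s ≤ m + r + 1 → ¬ P s) :
    ((incTrees (m + r)).filter fun g => P (mcLeafVal g)).card =
      ∑ f ∈ incTrees m,
        (if P (mcLeafVal f) then growCount r (degCount f 0 - 1) (degCount f 1) else 0) := by
  rw [Finset.card_filter]
  have := sum_growCount_iterate P m r 0 hP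
  simpa only [growCount, Nat.zero_add] using this

lemma sum_growCount_all (m r : ℕ) : ∀ t : ℕ,
    ∑ g ∈ incTrees (m + r), growCount t (degCount g 0) (degCount g 1) =
      ∑ f ∈ incTrees m, growCount (t + r) (degCount f 0) (degCount f 1) := by
  induction r with
  | zero => intro t; rfl
  | succ r ih =>
    intro t
    have h := sum_incTrees_stat (m + r) (fun _ a b => growCount t a b)
    rw [← Nat.add_assoc, h]
    have e : t + (r + 1) = (t + 1) + r := by omega
    rw [e, ← ih (t + 1)]
    apply Finset.sum_congr rfl
    intro f hf
    obtain ⟨a, ha⟩ := Nat.exists_eq_add_of_lt (degCount_zero_pos hf)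
    simp only [growCount, ha, Nat.zero_add, Nat.add_sub_cancel]
    ring

lemma card_incTrees (m r : ℕ) :
    (incTrees (m + r)).card = ∑ f ∈ incTrees m, growCount r (degCount f 0) (degCount f 1) := by
  have := sum_growCount_all m r 0
  simpa [growCount] using this

lemma mcLeafVal_le {m : ℕ} (f : Fin (m + 1) → Fin (m + 1)) : mcLeafVal f ≤ m + 1 := by
  rw [mcLeafVal_eq]; have := (mcLeaf f).isLt; omega

/-- Vertex `m + 2` ends the main chain only if it is attached to the main-chain leaf of the tree on
the first `m + 1` vertices; that leaf then becomes a vertex with one child. -/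
lemma card_leaf_eq (m r : ℕ) :
    ((incTrees (m + 1 + r)).filter fun g => mcLeafVal g = m + 2).card =
      ∑ f ∈ incTrees m, growCount r (degCount f 0 - 1) (degCount f 1 + 1) := by
  rw [card_eq_sum_growCount (fun p => p = m + 2) (m + 1) r (by intros; omega)]
  rw [sum_incTrees_stat m (fun p a b => if p = m + 2 then growCount r (a - 1) b else 0)]
  apply Finset.sum_congr rfl
  intro f _
  have : mcLeafVal f ≠ m + 2 := by have := mcLeafVal_le f; omega
  simp [this]

lemma degCount_one_vertex (f : Fin 1 → Fin 1) : degCount f 0 = 1 ∧ degCount f 1 = 0 := by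
  have : ∀ v, childCount f v = 0 := by
    intro v
    rw [childCount, Finset.card_eq_zero, Finset.filter_eq_empty_iff]
    rintro i - ⟨h, -⟩
    omega
  simp [degCount, this]

/-! ### The recurrence -/

/-- The recurrence for `k = 2`. -/
lemma card_recurrence_two (r : ℕ) :
    ((incTrees (r + 2)).filter fun g => mcLeafVal g = 2).card = (incTrees r).card := by
  have h1 := card_leaf_eq 0 (r + 1)
  have h2 := card_incTrees 0 r
  rw [show 0 + 1 + (r + 1) = r + 2 by omega] at h1
  rw [Nat.zero_add] at h2
  rw [h1, h2]
  apply Finset.sum_congr rfl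
  intro f _
  obtain ⟨ha, hb⟩ := degCount_one_vertex f
  simp [ha, hb, growCount]

lemma card_leaf_one (r : ℕ) :
    ((incTrees (r + 1)).filter fun g => mcLeafVal g = 1).card = 0 := by
  have h := card_eq_sum_growCount (fun p => p = 1) 0 (r + 1) (by intros; omega)
  rw [Nat.zero_add] at h
  rw [h]
  apply Finset.sum_eq_zero
  intro f _
  obtain ⟨ha, hb⟩ := degCount_one_vertex f
  simp [ha, hb, growCount]

/-- The recurrence for `k = q + 3` and `n = q + r + 3`, with the trees on `n - 2` vertices whose
main-chain leaf is at most `k - 2` moved to the left-hand side. -/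
lemma card_recurrence (q r : ℕ) :
    ((incTrees (q + r + 2)).filter fun g => mcLeafVal g = q + 3).card +
        ((incTrees (q + r)).filter fun g => mcLeafVal g ≤ q + 1).card =
      ((incTrees (q + r + 2)).filter fun g => mcLeafVal g = q + 2).card +
        (incTrees (q + r)).card := by
  have h1 := card_leaf_eq (q + 1) r
  have h2 := card_leaf_eq q (r + 1)
  have h3 := card_eq_sum_growCount (fun p => p ≤ q + 1) q r (by intros; omega)
  have h4 := sum_incTrees_stat q (fun _ a b => growCount r (a - 1) (b + 1))
  rw [show q + 1 + 1 + r = q + r + 2 by omega] at h1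
  rw [show q + 1 + (r + 1) = q + r + 2 by omega] at h2
  rw [show q + 3 = q + 1 + 2 by omega, h1, h2, h3, h4, card_incTrees q r,
    ← Finset.sum_add_distrib, ← Finset.sum_add_distrib]
  apply Finset.sum_congr rfl
  intro f hf
  rw [if_pos (mcLeafVal_le f)]
  obtain ⟨a, ha⟩ := Nat.exists_eq_add_of_lt (degCount_zero_pos hf)
  have hg := growCount_add r a (degCount f 1)
  rw [ha]
  simp only [growCount, Nat.zero_add, Nat.add_sub_cancel]
  rcases Nat.eq_zero_or_pos (degCount f 1) with hb | hb
  · simp only [hb] at hg ⊢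
    norm_num at hg ⊢
    linarith
  · rw [Nat.sub_add_cancel hb]
    linear_combination hg

open Finset in
lemma card_leaf_gt (m k : ℕ) :
    ((incTrees m).filter fun g => mcLeafVal g ≤ k).card +
      ∑ i ∈ Icc (k + 3) (m + 3), ((incTrees m).filter fun g => mcLeafVal g = i - 2).card =
      (incTrees m).card := by
  have h : ∑ i ∈ Icc (k + 3) (m + 3), ((incTrees m).filter fun g => mcLeafVal g = i - 2).card =
      ((incTrees m).filter fun g => ¬ mcLeafVal g ≤ k).card := by
    rw [Finset.card_eq_sum_card_fiberwise (f := fun g => mcLeafVal g + 2)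
      (t := Icc (k + 3) (m + 3))]
    · apply Finset.sum_congr rfl
      intro i hi
      rw [Finset.filter_filter]
      congr 1
      ext g
      simp only [mem_filter, mem_Icc] at hi ⊢
      constructor
      · rintro ⟨a, b⟩; exact ⟨a, by omega, by omega⟩
      · rintro ⟨a, b, c⟩; exact ⟨a, by omega⟩
    · intro g hg
      have := mcLeafVal_le g
      simp only [coe_filter, Set.mem_ofPred_eq, coe_Icc, Set.mem_Icc] at hg ⊢
      omega
  rw [h, Finset.card_filter_add_card_filter_not]

lemma card_subtype_eq (m k : ℕ)
    [Fintype {f : Fin (m + 1) → Fin (m + 1) // IsIncTree (m + 1) f ∧ mcLeafVal f = k}] :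
    Fintype.card {f : Fin (m + 1) → Fin (m + 1) // IsIncTree (m + 1) f ∧ mcLeafVal f = k} =
      ((incTrees m).filter fun g => mcLeafVal g = k).card := by
  rw [Fintype.card_of_subtype]
  intro f
  simp [mem_incTrees]

/-- For `n ≥ 3` and `2 ≤ k ≤ n`, there is a bijection between `T_{n,k}` and the
disjoint union of `T_{n,k-1}` with the disjoint union over `i = k+1, …, n` of
the sets `T_{n-2,i-2}`. -/
theorem treeT_equiv_recurrence (n k : ℕ) (hn : 3 ≤ n) (hk2 : 2 ≤ k) (hkn : k ≤ n) :
    Nonempty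
      ({f : Fin n → Fin n // IsIncTree n f ∧ mcLeafVal f = k} ≃
        {f : Fin n → Fin n // IsIncTree n f ∧ mcLeafVal f = k - 1} ⊕
          Σ i : Finset.Icc (k + 1) n,
            {f : Fin (n - 2) → Fin (n - 2) //
              IsIncTree (n - 2) f ∧ mcLeafVal f = (i : ℕ) - 2}) := by
  classical
  obtain ⟨m, rfl⟩ : ∃ m, n = m + 3 := ⟨n - 3, by omega⟩
  apply Fintype.card_eq.1
  rw [Fintype.card_sum, Fintype.card_sigma]
  have e : ∀ i : ℕ, Fintype.card {f : Fin (m + 3 - 2) → Fin (m + 3 - 2) //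
      IsIncTree (m + 3 - 2) f ∧ mcLeafVal f = i - 2} =
      ((incTrees m).filter fun g => mcLeafVal g = i - 2).card :=
    fun i => card_subtype_eq m (i - 2)
  simp only [e]
  rw [Finset.sum_coe_sort (Finset.Icc (k + 1) (m + 3))
    (fun i => ((incTrees m).filter fun g => mcLeafVal g = i - 2).card)]
  rw [card_subtype_eq (m + 2), card_subtype_eq (m + 2)]
  obtain ⟨k, rfl⟩ : ∃ l, k = l + 2 := ⟨k - 2, by omega⟩
  have h := card_leaf_gt m k
  cases k with
  | zero =>
    have h0 : ((incTrees m).filter fun g => mcLeafVal g ≤ 0).card = 0 := by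
      rw [Finset.card_eq_zero, Finset.filter_eq_empty_iff]
      intro g _
      rw [mcLeafVal_eq]
      omega
    have h1 : ((incTrees (m + 2)).filter fun g => mcLeafVal g = 1).card = 0 :=
      card_leaf_one (m + 1)
    have h2 := card_recurrence_two m
    simp only [Nat.zero_add, Nat.reduceAdd, Nat.reduceSub] at *
    omega
  | succ q =>
    obtain ⟨r, rfl⟩ : ∃ r, m = q + r := ⟨m - q, by omega⟩
    have h1 := card_recurrence q r
    have e1 : q + 1 + 2 - 1 = q + 2 := by omega
    have e2 : q + 1 + 2 = q + 3 := by omega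
    rw [e1, e2]
    change _ = _ + ∑ i ∈ Finset.Icc (q + 1 + 3) (q + r + 3), _
    omega
end

section
/- Let t_{n,k} = |T_{n,k}|. For all n ≥ 2 and all k with 2 ≤ k ≤ n, t_{n,k} = t_{n,k-1} + t_{n-1,n-k+1}. -/
/-- `t_{n,k} = |T_{n,k}|`. -/
noncomputable def treeT (n k : ℕ) : ℕ :=
  Nat.card {f : Fin n → Fin n // IsIncTree n f ∧ mcLeafVal f = k}

namespace IncTree

open Finset

/-! ### Growing trees by one vertex -/

/-- The number of children of `j`; the self-loop at the root does not count. -/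
def cc {n : ℕ} (f : Fin n → Fin n) (j : Fin n) : ℕ :=
  (univ.filter fun i : Fin n => (i : ℕ) ≠ 0 ∧ f i = j).card

/-- The number of leaves. -/
def leaves {n : ℕ} (f : Fin n → Fin n) : ℕ := (univ.filter fun j => cc f j = 0).card

/-- The number of vertices with exactly one child. -/
def halves {n : ℕ} (f : Fin n → Fin n) : ℕ := (univ.filter fun j => cc f j = 1).card

/-- The tree obtained from `f` by attaching a new largest vertex to `j`. -/
def ext {n : ℕ} (f : Fin n → Fin n) (j : Fin n) : Fin (n + 1) → Fin (n + 1) :=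
  Fin.lastCases j.castSucc (fun i => (f i).castSucc)

@[simp] lemma ext_last {n : ℕ} (f : Fin n → Fin n) (j : Fin n) :
    ext f j (Fin.last n) = j.castSucc := by simp [ext]

@[simp] lemma ext_castSucc {n : ℕ} (f : Fin n → Fin n) (j i : Fin n) :
    ext f j i.castSucc = (f i).castSucc := by simp [ext]

lemma cc_ext_castSucc {n : ℕ} (hn : 1 ≤ n) (f : Fin n → Fin n) (j x : Fin n) :
    cc (ext f j) x.castSucc = cc f x + if j = x then 1 else 0 := by
  have h0 : n ≠ 0 := by omega
  simp only [cc, card_filter, Fin.sum_univ_castSucc]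
  simp [-sum_boole, h0]

lemma cc_ext_last {n : ℕ} (f : Fin n → Fin n) (j : Fin n) :
    cc (ext f j) (Fin.last n) = 0 := by
  simp only [cc, card_filter, Fin.sum_univ_castSucc]
  simp [-sum_boole, Fin.castSucc_ne_last]

lemma leaves_ext {n : ℕ} (hn : 1 ≤ n) (f : Fin n → Fin n) (j : Fin n) :
    leaves (ext f j) + (if cc f j = 0 then 1 else 0) = leaves f + 1 := by
  have h : ∀ x, (if cc f x + (if j = x then 1 else 0) = 0 then 1 else 0)
      + (if j = x then (if cc f x = 0 then 1 else 0) else 0) = if cc f x = 0 then 1 else 0 := by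
    intro x; by_cases hx : j = x <;> by_cases h0 : cc f x = 0 <;> simp [hx, h0]
  have h2 := Finset.sum_congr (rfl : (univ : Finset (Fin n)) = univ) (fun x _ => h x)
  rw [sum_add_distrib, sum_ite_eq] at h2
  simp only [leaves, card_filter, Fin.sum_univ_castSucc, cc_ext_castSucc hn, cc_ext_last]
  simp only [mem_univ, if_true] at h2 ⊢
  omega

lemma halves_ext {n : ℕ} (hn : 1 ≤ n) (f : Fin n → Fin n) (j : Fin n) :
    halves (ext f j) + (if cc f j = 1 then 1 else 0)
      = halves f + (if cc f j = 0 then 1 else 0) := by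
  have h : ∀ x, (if cc f x + (if j = x then 1 else 0) = 1 then 1 else 0)
      + (if j = x then (if cc f x = 1 then 1 else 0) else 0)
      = (if cc f x = 1 then 1 else 0) + (if j = x then (if cc f x = 0 then 1 else 0) else 0) := by
    intro x; by_cases hx : j = x <;> simp only [hx, if_true, if_false] <;> split_ifs <;> omega
  have h2 := Finset.sum_congr (rfl : (univ : Finset (Fin n)) = univ) (fun x _ => h x)
  rw [sum_add_distrib, sum_add_distrib, sum_ite_eq, sum_ite_eq] at h2
  simp only [halves, card_filter, Fin.sum_univ_castSucc, cc_ext_castSucc hn, cc_ext_last]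
  simp only [mem_univ, if_true] at h2 ⊢
  simpa using h2

lemma isIncTree_ext {n : ℕ} (hn : 1 ≤ n) (f : Fin n → Fin n) (j : Fin n) :
    IsIncTree (n + 1) (ext f j) ↔ IsIncTree n f ∧ cc f j < 2 := by
  have h0 : n ≠ 0 := by omega
  have hcc : (∀ x, cc (ext f j) x ≤ 2) ↔ (∀ x, cc f x ≤ 2) ∧ cc f j < 2 := by
    rw [Fin.forall_fin_succ']
    simp only [cc_ext_castSucc hn, cc_ext_last]
    constructor
    · rintro ⟨h, -⟩
      refine ⟨fun x => (Nat.le_add_right _ _).trans (h x), ?_⟩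
      have := h j
      simp at this
      omega
    · rintro ⟨h, hj⟩
      refine ⟨fun x => ?_, by omega⟩
      split_ifs with hx
      · subst hx; omega
      · exact h x
  change (_ ∧ _ ∧ (∀ x, cc (ext f j) x ≤ 2)) ↔ (_ ∧ _ ∧ (∀ x, cc f x ≤ 2)) ∧ _
  rw [hcc, Fin.forall_fin_succ', Fin.forall_fin_succ']
  simp [h0]
  tauto

open Classical in
/-- The finite set of 0-1-2 increasing trees on `[n]`. -/
noncomputable def treeSet (n : ℕ) : Finset (Fin n → Fin n) := univ.filter (IsIncTree n)

lemma mem_treeSet {n : ℕ} {f : Fin n → Fin n} : f ∈ treeSet n ↔ IsIncTree n f := by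
  simp [treeSet]

/-- Every tree on `[n+1]` is uniquely a tree on `[n]` with a vertex `n+1` attached to a vertex
having at most one child. -/
lemma sum_treeSet_succ {n : ℕ} (hn : 1 ≤ n) (F : (Fin (n + 1) → Fin (n + 1)) → ℤ) :
    ∑ g ∈ treeSet (n + 1), F g
      = ∑ f ∈ treeSet n, ∑ j with cc f j < 2, F (ext f j) := by
  rw [Finset.sum_sigma']
  symm
  refine Finset.sum_bij (fun p _ => ext p.1 p.2) ?_ ?_ ?_ (fun _ _ => rfl)
  · rintro ⟨f, j⟩ h
    simp only [mem_sigma, mem_treeSet, mem_filter, mem_univ, true_and] at h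
    exact mem_treeSet.2 ((isIncTree_ext hn f j).2 h)
  · rintro ⟨f, j⟩ - ⟨f', j'⟩ - h
    have hj : j = j' := by simpa using congrFun h (Fin.last n)
    have hf : f = f' := by
      funext i
      simpa using congrFun h i.castSucc
    subst hj hf
    rfl
  · intro g hg
    have hg' := mem_treeSet.1 hg
    have hle : ∀ i : Fin n, (g i.castSucc : ℕ) < n := by
      intro i
      by_cases hi : (i : ℕ) = 0
      · rw [hg'.1 i.castSucc (by simpa using hi)]; simp
      · have := hg'.2.1 i.castSucc (by simpa using hi)
        simp at this
        omega
    have hlast : (g (Fin.last n) : ℕ) < n := by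
      have := hg'.2.1 (Fin.last n) (by simp; omega)
      simpa using this
    have he : ext (fun i => ⟨g i.castSucc, hle i⟩) ⟨g (Fin.last n), hlast⟩ = g := by
      funext i
      refine Fin.lastCases ?_ (fun i => ?_) i
      · rw [ext_last]; rfl
      · rw [ext_castSucc]; rfl
    refine ⟨⟨_, _⟩, ?_, he⟩
    have := (isIncTree_ext hn _ _).1 (he.symm ▸ hg')
    simpa [mem_treeSet] using this

/-! ### The main chain -/

lemma mcStep_spec {n : ℕ} (f : Fin n → Fin n) (j : Fin n) :
    (mcStep n f j = j ∧ ∀ i : Fin n, ¬ ((i : ℕ) ≠ 0 ∧ f i = j ∧ j < i)) ∨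
    (((mcStep n f j : ℕ) ≠ 0 ∧ f (mcStep n f j) = j ∧ j < mcStep n f j) ∧
      ∀ i : Fin n, (i : ℕ) ≠ 0 → f i = j → j < i → mcStep n f j ≤ i) := by
  unfold mcStep
  by_cases h : (univ.filter fun i : Fin n => (i : ℕ) ≠ 0 ∧ f i = j ∧ j < i).Nonempty
  · right
    simp only [h, dif_pos]
    have := Finset.min'_mem _ h
    rw [mem_filter] at this
    refine ⟨this.2, fun i h1 h2 h3 => Finset.min'_le _ _ (by simp [h1, h2, h3])⟩
  · left
    simp only [h, dif_neg, not_false_iff, true_and]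
    intro i hi
    exact h ⟨i, by simpa using hi⟩

lemma le_mcStep {n : ℕ} (f : Fin n → Fin n) (j : Fin n) : j ≤ mcStep n f j := by
  rcases mcStep_spec f j with h | h
  · exact h.1.ge
  · exact h.1.2.2.le

/-- A strictly increasing chain in `Fin n` stops within `n` steps. -/
lemma mcStep_iterate_fixed {n : ℕ} (f : Fin n → Fin n) (j : Fin n) :
    mcStep n f ((mcStep n f)^[n] j) = (mcStep n f)^[n] j := by
  have key : ∀ m, mcStep n f ((mcStep n f)^[m] j) = (mcStep n f)^[m] j ∨
      m ≤ ((mcStep n f)^[m] j : ℕ) := by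
    intro m
    induction m with
    | zero => right; simp
    | succ m ih =>
      rw [Function.iterate_succ_apply']
      by_cases h : mcStep n f ((mcStep n f)^[m] j) = (mcStep n f)^[m] j
      · left; rw [h, h]
      · right
        have h1 := ih.resolve_left h
        have h2 := lt_of_le_of_ne (le_mcStep f ((mcStep n f)^[m] j)) (Ne.symm h)
        have h3 : ((mcStep n f)^[m] j : ℕ) < mcStep n f ((mcStep n f)^[m] j) := h2
        omega
  rcases key n with h | h
  · exact h
  · exact absurd ((mcStep n f)^[n] j).2 (by omega)

lemma iterate_eq_of_fixed {n : ℕ} (f : Fin n → Fin n) (j y : Fin n) (m : ℕ)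
    (hm : (mcStep n f)^[m] j = y) (hy : mcStep n f y = y) : (mcStep n f)^[n] j = y := by
  have hx := mcStep_iterate_fixed f j
  have h1 : (mcStep n f)^[m + n] j = y := by
    rw [add_comm, Function.iterate_add_apply, hm, Function.iterate_fixed hy]
  rw [Function.iterate_add_apply, Function.iterate_fixed hx] at h1
  exact h1

/-- On an increasing tree, the side condition `j < i` in `mcStep` holds automatically. -/
lemma mcStep_eq_self_iff {n : ℕ} {f : Fin n → Fin n} (hf : IsIncTree n f) (j : Fin n) :
    mcStep n f j = j ↔ cc f j = 0 := by
  have hcc : cc f j = 0 ↔ ∀ i : Fin n, (i : ℕ) ≠ 0 → f i ≠ j := by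
    simp [cc, filter_eq_empty_iff]
  rw [hcc]
  rcases mcStep_spec f j with h | h
  · refine ⟨fun _ i hi hij => h.2 i ⟨hi, hij, ?_⟩, fun _ => h.1⟩
    have := hf.2.1 i hi
    rw [hij] at this
    exact this
  · exact ⟨fun e => absurd e h.1.2.2.ne', fun e => absurd h.1.2.1 (e _ h.1.1)⟩

lemma mcStep_ext_last {n : ℕ} (f : Fin n → Fin n) (j : Fin n) :
    mcStep (n + 1) (ext f j) (Fin.last n) = Fin.last n :=
  le_antisymm (Fin.le_last _) (le_mcStep _ _)

lemma mcStep_ext_of_ne {n : ℕ} (f : Fin n → Fin n) (j x : Fin n)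
    (hx : mcStep n f x ≠ x) :
    mcStep (n + 1) (ext f j) x.castSucc = (mcStep n f x).castSucc := by
  have h := (mcStep_spec f x).resolve_left (fun h => hx h.1)
  rcases mcStep_spec (ext f j) x.castSucc with h' | h'
  · exact absurd ⟨by simpa using h.1.1, by simpa using h.1.2.1, by simpa using h.1.2.2⟩
      (h'.2 (mcStep n f x).castSucc)
  · have hle := h'.2 (mcStep n f x).castSucc (by simpa using h.1.1) (by simpa using h.1.2.1)
      (by simpa using h.1.2.2)
    refine le_antisymm hle ?_
    generalize mcStep (n + 1) (ext f j) x.castSucc = z at *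
    induction z using Fin.lastCases with
    | last => exact Fin.le_last _
    | cast i =>
      have := h.2 i (by simpa using h'.1.1) (by simpa using h'.1.2.1) (by simpa using h'.1.2.2)
      simpa using this

lemma mcStep_ext_leaf {n : ℕ} (hn : 1 ≤ n) {f : Fin n → Fin n} (hf : IsIncTree n f)
    (j x : Fin n) (hx : mcStep n f x = x) :
    mcStep (n + 1) (ext f j) x.castSucc = if j = x then Fin.last n else x.castSucc := by
  have hc := (mcStep_eq_self_iff hf x).1 hx
  rcases mcStep_spec (ext f j) x.castSucc with h' | h'
  · split_ifs with h
    · subst h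
      refine absurd ⟨by simp; omega, by simp, ?_⟩ (h'.2 (Fin.last n))
      exact Fin.castSucc_lt_last _
    · exact h'.1
  · generalize mcStep (n + 1) (ext f j) x.castSucc = z at *
    induction z using Fin.lastCases with
    | last =>
      have : j = x := by simpa using h'.1.2.1
      simp [this]
    | cast i =>
      exfalso
      have hcc : ∀ i : Fin n, (i : ℕ) ≠ 0 → f i ≠ x := by
        simpa [cc, filter_eq_empty_iff] using hc
      exact hcc i (by simpa using h'.1.1) (by simpa using h'.1.2.1)

/-- The endpoint of the main chain started at the root, as a vertex. -/
def mcEnd {n : ℕ} (hn : 1 ≤ n) (f : Fin n → Fin n) : Fin n := (mcStep n f)^[n] ⟨0, hn⟩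

lemma mcLeafVal_eq {n : ℕ} (hn : 1 ≤ n) (f : Fin n → Fin n) :
    mcLeafVal f = (mcEnd hn f : ℕ) + 1 := by
  have : 0 < n := hn
  simp [mcLeafVal, mcEnd, this]

lemma cc_mcEnd {n : ℕ} (hn : 1 ≤ n) {f : Fin n → Fin n} (hf : IsIncTree n f) :
    cc f (mcEnd hn f) = 0 :=
  (mcStep_eq_self_iff hf _).1 (mcStep_iterate_fixed f _)

/-- The main chain is lengthened exactly when the new vertex is attached to its endpoint. -/
lemma mcEnd_ext {n : ℕ} (hn : 1 ≤ n) {f : Fin n → Fin n} (hf : IsIncTree n f) (j : Fin n) :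
    mcEnd (Nat.le_add_left 1 n) (ext f j)
      = if j = mcEnd hn f then Fin.last n else (mcEnd hn f).castSucc := by
  have hfix : mcStep n f (mcEnd hn f) = mcEnd hn f := mcStep_iterate_fixed f _
  have hE := mcStep_ext_leaf hn hf j _ hfix
  have key : ∀ m x, (mcStep n f)^[m] x = mcEnd hn f → ∃ m',
      (mcStep (n + 1) (ext f j))^[m'] x.castSucc
        = if j = mcEnd hn f then Fin.last n else (mcEnd hn f).castSucc := by
    intro m
    induction m with
    | zero =>
      intro x hx
      refine ⟨1, ?_⟩
      rw [Function.iterate_zero_apply] at hx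
      rw [Function.iterate_one, hx, hE]
    | succ m ih =>
      intro x hx
      rw [Function.iterate_succ_apply] at hx
      by_cases h : mcStep n f x = x
      · rw [h] at hx
        exact ih x hx
      · obtain ⟨m', hm'⟩ := ih _ hx
        refine ⟨m' + 1, ?_⟩
        rw [Function.iterate_succ_apply, mcStep_ext_of_ne f j x h, hm']
  obtain ⟨m, hm⟩ := key n ⟨0, hn⟩ rfl
  refine iterate_eq_of_fixed _ _ _ m hm ?_
  split_ifs with h
  · exact mcStep_ext_last f j
  · rw [hE, if_neg h]

/-! ### Weighted counts -/

/-- Effect on a weight of attaching a vertex anywhere. For `b = 0` the truncated `b - 1` is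
multiplied by zero. -/
def U (φ : ℕ → ℕ → ℤ) (a b : ℕ) : ℤ := a * φ a (b + 1) + b * φ (a + 1) (b - 1)

/-- Effect on a weight of attaching a vertex anywhere except at the main-chain leaf. -/
def V (φ : ℕ → ℕ → ℤ) (a b : ℕ) : ℤ := (a - 1) * φ a (b + 1) + b * φ (a + 1) (b - 1)

/-- Effect on a weight of attaching a vertex to the main-chain leaf. -/
def S (φ : ℕ → ℕ → ℤ) (a b : ℕ) : ℤ := φ a (b + 1)

/-- The sum of `φ (leaves, halves)` over all trees on `[n]`. -/
noncomputable def W (n : ℕ) (φ : ℕ → ℕ → ℤ) : ℤ := ∑ f ∈ treeSet n, φ (leaves f) (halves f)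

/-- The sum of `φ (leaves, halves)` over the trees on `[n]` with main-chain leaf `k`. -/
noncomputable def Wk (n k : ℕ) (φ : ℕ → ℕ → ℤ) : ℤ :=
  ∑ f ∈ treeSet n, if mcLeafVal f = k then φ (leaves f) (halves f) else 0

lemma treeT_eq (n k : ℕ) : (treeT n k : ℤ) = Wk n k (fun _ _ => 1) := by
  classical
  rw [treeT, Wk, Nat.card_eq_fintype_card, Fintype.card_subtype, Finset.sum_boole, treeSet,
    filter_filter]

lemma weight_ext {n : ℕ} (hn : 1 ≤ n) (f : Fin n → Fin n) (j : Fin n) (hj : cc f j < 2)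
    (φ : ℕ → ℕ → ℤ) :
    φ (leaves (ext f j)) (halves (ext f j))
      = (if cc f j = 0 then φ (leaves f) (halves f + 1) else 0)
        + (if cc f j = 1 then φ (leaves f + 1) (halves f - 1) else 0) := by
  have h1 := leaves_ext hn f j
  have h2 := halves_ext hn f j
  rcases (by omega : cc f j = 0 ∨ cc f j = 1) with h | h
  · simp only [h] at h1 h2 ⊢
    simp only [if_true] at h1 h2 ⊢
    rw [(by omega : leaves (ext f j) = leaves f),
      (by simpa using h2 : halves (ext f j) = halves f + 1)]
    simp
  · simp only [h] at h1 h2 ⊢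
    simp only [if_true] at h1 h2 ⊢
    rw [(by simpa using h1 : leaves (ext f j) = leaves f + 1),
      (by simp at h2; omega : halves (ext f j) = halves f - 1)]
    simp

lemma sum_weight_ext {n : ℕ} (hn : 1 ≤ n) (f : Fin n → Fin n) (φ : ℕ → ℕ → ℤ) :
    ∑ j with cc f j < 2, φ (leaves (ext f j)) (halves (ext f j))
      = U φ (leaves f) (halves f) := by
  rw [Finset.sum_congr rfl (fun j hj => weight_ext hn f j (mem_filter.1 hj).2 φ)]
  rw [Finset.sum_add_distrib, ← Finset.sum_filter, ← Finset.sum_filter, filter_filter,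
    filter_filter, Finset.sum_const, Finset.sum_const]
  have h0 : ∀ j, (cc f j < 2 ∧ cc f j = 0) ↔ cc f j = 0 := by intro j; omega
  have h1 : ∀ j, (cc f j < 2 ∧ cc f j = 1) ↔ cc f j = 1 := by intro j; omega
  simp only [h0, h1, U, leaves, halves, nsmul_eq_mul]

lemma W_succ {n : ℕ} (hn : 1 ≤ n) (φ : ℕ → ℕ → ℤ) : W (n + 1) φ = W n (U φ) := by
  rw [W, sum_treeSet_succ hn, W]
  exact Finset.sum_congr rfl fun f _ => sum_weight_ext hn f φ

lemma weight_ext_mcEnd {n : ℕ} (hn : 1 ≤ n) {f : Fin n → Fin n} (hf : IsIncTree n f)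
    (φ : ℕ → ℕ → ℤ) :
    φ (leaves (ext f (mcEnd hn f))) (halves (ext f (mcEnd hn f)))
      = S φ (leaves f) (halves f) := by
  have h := cc_mcEnd hn hf
  rw [weight_ext hn f _ (by omega) φ]
  simp [h, S]

lemma mcLeafVal_ext {n : ℕ} (hn : 1 ≤ n) {f : Fin n → Fin n} (hf : IsIncTree n f) (j : Fin n) :
    mcLeafVal (ext f j) = if j = mcEnd hn f then n + 1 else mcLeafVal f := by
  rw [mcLeafVal_eq (Nat.le_add_left 1 n), mcEnd_ext hn hf, mcLeafVal_eq hn]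
  split_ifs <;> simp

lemma mcLeafVal_le {n : ℕ} (hn : 1 ≤ n) (f : Fin n → Fin n) : mcLeafVal f ≤ n := by
  rw [mcLeafVal_eq hn]; exact (mcEnd hn f).2

lemma Wk_top {n : ℕ} (hn : 1 ≤ n) (φ : ℕ → ℕ → ℤ) : Wk (n + 1) (n + 1) φ = W n (S φ) := by
  rw [Wk, sum_treeSet_succ hn, W]
  refine Finset.sum_congr rfl fun f hf => ?_
  have hf' := mem_treeSet.1 hf
  have hle := mcLeafVal_le hn f
  have hm : mcEnd hn f ∈ univ.filter fun j => cc f j < 2 := by simp [cc_mcEnd hn hf']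
  rw [Finset.sum_eq_single_of_mem _ hm, mcLeafVal_ext hn hf', if_pos rfl, if_pos rfl,
    weight_ext_mcEnd hn hf' φ]
  intro j _ hj
  rw [mcLeafVal_ext hn hf', if_neg hj, if_neg (by omega)]

lemma Wk_succ {n k : ℕ} (hn : 1 ≤ n) (hk : k ≤ n) (φ : ℕ → ℕ → ℤ) :
    Wk (n + 1) k φ = Wk n k (V φ) := by
  rw [Wk, sum_treeSet_succ hn, Wk]
  refine Finset.sum_congr rfl fun f hf => ?_
  have hf' := mem_treeSet.1 hf
  have hm : mcEnd hn f ∈ univ.filter fun j => cc f j < 2 := by simp [cc_mcEnd hn hf']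
  have hs := sum_weight_ext hn f φ
  rw [← Finset.add_sum_erase _ _ hm, weight_ext_mcEnd hn hf' φ] at hs
  rw [← Finset.add_sum_erase _ _ hm, mcLeafVal_ext hn hf', if_pos rfl, if_neg (by omega), zero_add]
  have : ∀ j ∈ (univ.filter fun j => cc f j < 2).erase (mcEnd hn f),
      (if mcLeafVal (ext f j) = k then φ (leaves (ext f j)) (halves (ext f j)) else 0)
      = if mcLeafVal f = k then φ (leaves (ext f j)) (halves (ext f j)) else 0 := by
    intro j hj
    rw [mcLeafVal_ext hn hf', if_neg (Finset.mem_erase.1 hj).1]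
  rw [Finset.sum_congr rfl this]
  split_ifs with h
  · simp only [U, S, V] at hs ⊢
    linarith
  · simp

lemma treeSet_one : treeSet 1 = {id} := by
  ext f
  have hf : f = id := Subsingleton.elim _ _
  rw [mem_treeSet, hf]
  simp only [mem_singleton, iff_true]
  refine ⟨fun _ _ => rfl, fun i hi => absurd (by omega) hi, fun j => ?_⟩
  exact (Finset.card_le_univ _).trans (by simp)

lemma W_one (φ : ℕ → ℕ → ℤ) : W 1 φ = φ 1 0 := by
  rw [W, treeSet_one, Finset.sum_singleton]
  congr 1

lemma Wk_one_one (φ : ℕ → ℕ → ℤ) : Wk 1 1 φ = φ 1 0 := by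
  have : mcLeafVal (id : Fin 1 → Fin 1) = 1 := by
    have h1 := mcLeafVal_le le_rfl (id : Fin 1 → Fin 1)
    rw [mcLeafVal_eq le_rfl] at h1 ⊢
    omega
  rw [Wk, treeSet_one, Finset.sum_singleton, if_pos this]
  congr 1

/-! ### The algebra of the growth operators -/

/-- The number of ways to attach `j` further vertices to a tree with `a` leaves and `b` one-child
vertices, never using one designated leaf. -/
def avoid (j : ℕ) : ℕ → ℕ → ℤ := V^[j] (fun _ _ => 1)

lemma avoid_succ (j : ℕ) : avoid (j + 1) = V (avoid j) := Function.iterate_succ_apply' _ _ _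

lemma two_mul_avoid (j : ℕ) : ∀ a b, 2 * avoid j (a + 1) b = avoid j a b + avoid j a (b + 2) := by
  induction j with
  | zero => intro a b; simp [avoid]
  | succ j ih =>
    intro a b
    rw [avoid_succ]
    have h1 := ih a (b + 1)
    cases b with
    | zero =>
      simp only [V]
      push_cast
      linear_combination ((a : ℤ) - 1) * h1
    | succ b =>
      have h2 := ih (a + 1) b
      simp only [V, Nat.add_sub_cancel, show b + 1 + 2 - 1 = b + 2 from rfl]
      push_cast
      linear_combination ((a : ℤ) - 1) * h1 + ((b : ℤ) + 1) * h2

lemma Wk_eq_avoid {n k : ℕ} (hn : 1 ≤ n) (hk : k ≤ n) (j : ℕ) :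
    Wk (n + j) k (fun _ _ => 1) = Wk n k (avoid j) := by
  suffices h : ∀ j (φ : ℕ → ℕ → ℤ), Wk (n + j) k φ = Wk n k (V^[j] φ) from h j _
  intro j
  induction j with
  | zero => intro φ; rfl
  | succ j ih =>
    intro φ
    rw [← add_assoc, Wk_succ (by omega) (by omega), ih, Function.iterate_succ_apply]

/-- `t_{l+1+j, l+1} = W l (S φ_j)`. -/
lemma treeT_eq_W {l : ℕ} (hl : 1 ≤ l) (j : ℕ) :
    (treeT (l + 1 + j) (l + 1) : ℤ) = W l (S (avoid j)) := by
  rw [treeT_eq, Wk_eq_avoid (by omega) le_rfl, Wk_top hl]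

lemma treeT_one (j : ℕ) : (treeT (j + 2) 1 : ℤ) = 0 := by
  rw [treeT_eq, show j + 2 = 1 + (j + 1) by omega, Wk_eq_avoid le_rfl le_rfl, Wk_one_one,
    avoid_succ]
  simp [V]

lemma W_add (l : ℕ) (φ ψ : ℕ → ℕ → ℤ) : W l (fun a b => φ a b + ψ a b) = W l φ + W l ψ := by
  simp [W, Finset.sum_add_distrib]

lemma W_sub (l : ℕ) (φ ψ : ℕ → ℕ → ℤ) : W l (fun a b => φ a b - ψ a b) = W l φ - W l ψ := by
  simp [W, Finset.sum_sub_distrib]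

/-- The number of ways to attach `j` further vertices anywhere: `a` leaves without restriction
count like `a + 1` leaves one of which is forbidden. -/
def free (j a b : ℕ) : ℤ := avoid j (a + 1) b

lemma free_succ (j : ℕ) : free (j + 1) = U (free j) := by
  funext a b
  simp only [free, avoid_succ, V, U]
  push_cast
  ring

lemma W_free {l : ℕ} (hl : 1 ≤ l) (j : ℕ) : W l (free j) = W (l + j) (fun _ _ => 1) := by
  induction j generalizing l with
  | zero => rfl
  | succ j ih => rw [free_succ, ← W_succ hl, ih (by omega), show l + 1 + j = l + (j + 1) by omega]

/-- `t_{n,k} - t_{n,k-1}` with `k = l+2`, `n = l+2+j` counts the trees on `[l+j]` whose main-chain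
leaf exceeds `l`. -/
lemma treeT_sub {l : ℕ} (hl : 1 ≤ l) (j : ℕ) :
    (treeT (l + 2 + j) (l + 2) : ℤ) - treeT (l + 2 + j) (l + 1)
      = W l (free j) - W l (avoid j) := by
  have h1 := treeT_eq_W (show 1 ≤ l + 1 by omega) j
  have h2 := treeT_eq_W hl (j + 1)
  rw [show l + 1 + (j + 1) = l + 2 + j by omega] at h2
  rw [W_succ hl] at h1
  rw [show l + 2 = l + 1 + 1 from rfl] at *
  rw [h1, h2, ← W_sub, ← W_sub]
  congr 1
  funext a b
  have h := two_mul_avoid j a b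
  rw [avoid_succ]
  cases b with
  | zero =>
    simp only [U, S, V, free] at h ⊢
    push_cast
    simp only [zero_add] at h ⊢
    linear_combination -h
  | succ b =>
    simp only [U, S, V, free, Nat.add_sub_cancel] at h ⊢
    push_cast
    linear_combination -h

/-- Consecutive values of the difference in `treeT_sub` differ by a single `t`. -/
lemma free_sub_avoid_step {l : ℕ} (hl : 1 ≤ l) (j : ℕ) :
    W l (free (j + 1)) - W l (avoid (j + 1))
      = (W (l + 1) (free j) - W (l + 1) (avoid j)) + treeT (l + 1 + j) (l + 1) := by
  rw [treeT_eq_W hl, W_succ hl, W_succ hl, free_succ, avoid_succ]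
  have : W l (U (avoid j)) = W l (V (avoid j)) + W l (S (avoid j)) := by
    rw [← W_add]
    congr 1
    funext a b
    simp only [U, V, S]
    ring
  rw [this]
  ring

lemma treeT_two (n : ℕ) : (treeT (n + 3) 2 : ℤ) = treeT (n + 2) (n + 2) := by
  have h1 := treeT_eq_W le_rfl (n + 1)
  have h2 := treeT_eq_W (show 1 ≤ n + 1 by omega) 0
  rw [show 1 + 1 + (n + 1) = n + 3 by omega, W_one] at h1
  have h3 : W (n + 1) (S (avoid 0)) = W 1 (free n) := by
    rw [W_free le_rfl, add_comm 1 n]; rfl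
  rw [h3, W_one] at h2
  rw [h1]
  simp only [add_zero] at h2
  rw [h2, avoid_succ]
  simp [S, V, free]

lemma recurrence (n : ℕ) : ∀ k, 2 ≤ n → 2 ≤ k → k ≤ n →
    (treeT n k : ℤ) = treeT n (k - 1) + treeT (n - 1) (n - k + 1) := by
  induction n with
  | zero => intro k h; omega
  | succ n ih =>
    -- the difference at `k = l + 2`, by induction on `j = n + 1 - k`
    have key : ∀ j l, 1 ≤ l → n + 1 = l + 2 + j →
        W l (free j) - W l (avoid j) = treeT n (j + 1) := by
      intro j
      induction j with
      | zero =>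
        intro l hl h
        obtain ⟨i, rfl⟩ : ∃ i, l = i + 1 := ⟨l - 1, by omega⟩
        rw [show n = i + 2 by omega, treeT_one]
        exact sub_self _
      | succ j ihj =>
        intro l hl h
        rw [free_sub_avoid_step hl, ihj (l + 1) (by omega) (by omega),
          ih (j + 2) (by omega) (by omega) (by omega)]
        rw [show n - 1 = l + 1 + j by omega, show n - (j + 2) + 1 = l + 1 by omega]
        rfl
    intro k hn hk hkn
    rcases eq_or_lt_of_le hk with rfl | hk3
    · rcases eq_or_lt_of_le hn with h | h
      · obtain rfl : n = 1 := by omega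
        have h1 := treeT_eq_W le_rfl 0
        have h2 := treeT_one 0
        have h3 := treeT_eq 1 1
        rw [Wk_one_one] at h3
        rw [W_one] at h1
        simp only [Nat.reduceAdd, Nat.reduceSub, S, avoid, Function.iterate_zero_apply] at *
        rw [h1, h2, h3]
        norm_num
      · obtain ⟨i, rfl⟩ : ∃ i, n = i + 2 := ⟨n - 2, by omega⟩
        have h1 := treeT_two i
        have h2 := treeT_one (i + 1)
        rw [show i + 2 + 1 - 1 = i + 2 by omega, show i + 2 + 1 - 2 + 1 = i + 2 by omega, ← h1]
        rw [show i + 1 + 2 = i + 3 by omega] at h2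
        simp [h2]
    · obtain ⟨l, rfl⟩ : ∃ l, k = l + 2 := ⟨k - 2, by omega⟩
      obtain ⟨j, hj⟩ : ∃ j, n + 1 = l + 2 + j := ⟨n + 1 - (l + 2), by omega⟩
      have h1 := treeT_sub (show 1 ≤ l by omega) j
      rw [key j l (by omega) hj, ← hj] at h1
      rw [show l + 2 - 1 = l + 1 by omega, show n + 1 - 1 = n by omega,
        show n + 1 - (l + 2) + 1 = j + 1 by omega]
      linarith

end IncTree

/-- For `n ≥ 2` and `2 ≤ k ≤ n`, `t_{n,k} = t_{n,k-1} + t_{n-1,n-k+1}`. -/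
theorem treeT_recurrence_two (n k : ℕ) (hn : 2 ≤ n) (hk2 : 2 ≤ k) (hkn : k ≤ n) :
    treeT n k = treeT n (k - 1) + treeT (n - 1) (n - k + 1) := by
  exact_mod_cast IncTree.recurrence n k hn hk2 hkn
end

section
/- Let a_{n,k} = |A_{n,k}|. For all n ≥ 2 and all k with 2 ≤ k ≤ n, a_{n,k} = a_{n,k-1} + a_{n-1,n-k+1}. -/
/-- `a_{n,k} = |A_{n,k}|`. -/
noncomputable def altA (n k : ℕ) : ℕ :=
  Nat.card {π : Equiv.Perm (Fin n) // IsAltPerm n π ∧ firstEntry π = k}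

/-- Exchanging two consecutive values `d`, `c = d + 1` preserves `x < y` unless `(x, y) = (d, c)`. -/
lemma swap_lt_swap_of_consecutive {n : ℕ} {c d x y : Fin n} (hcd : (c : ℕ) = d + 1) (hxy : x < y)
    (h : ¬ (x = d ∧ y = c)) : Equiv.swap d c x < Equiv.swap d c y := by
  simp only [Equiv.swap_apply_def, Fin.ext_iff, Fin.lt_def] at *
  split_ifs <;> omega

/-- Exchanging the values `d` and `c = d + 1` keeps a permutation alternating when one of them is
the first entry and neither of them is the second. -/
lemma IsAltPerm.swap_mul {m : ℕ} {c d : Fin (m + 2)} {π : Equiv.Perm (Fin (m + 2))}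
    (hcd : (c : ℕ) = d + 1) (hπ : IsAltPerm (m + 2) π) (h0 : π 0 = c ∨ π 0 = d)
    (h1c : π 1 ≠ c) (h1d : π 1 ≠ d) : IsAltPerm (m + 2) (Equiv.swap d c * π) := by
  -- The position holding `c` or `d` other than position `0` is at least `2`.
  have key : ∀ i j : Fin (m + 2), ((i : ℕ) + 1 = j ∨ (j : ℕ) + 1 = i) →
      ¬ (π i = d ∧ π j = c) := by
    rintro i j hij ⟨hi, hj⟩
    rcases h0 with h0 | h0
    · have hj0 : j = 0 := π.injective (hj.trans h0.symm)
      subst hj0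
      have : i = 1 := by
        apply Fin.ext
        simp only [Fin.val_zero, Fin.val_one] at hij ⊢
        omega
      exact h1d (this ▸ hi)
    · have hi0 : i = 0 := π.injective (hi.trans h0.symm)
      subst hi0
      have : j = 1 := by
        apply Fin.ext
        simp only [Fin.val_zero, Fin.val_one] at hij ⊢
        omega
      exact h1c (this ▸ hj)
  intro i h
  have := hπ i h
  split_ifs at this ⊢
  · exact swap_lt_swap_of_consecutive hcd this (key _ _ (Or.inr rfl))
  · exact swap_lt_swap_of_consecutive hcd this (key _ _ (Or.inl rfl))

lemma firstEntry_succ {m : ℕ} (π : Equiv.Perm (Fin (m + 1))) :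
    firstEntry π = (π 0 : ℕ) + 1 := by
  simp [firstEntry]

lemma IsAltPerm.one_lt_zero {m : ℕ} {π : Equiv.Perm (Fin (m + 2))} (hπ : IsAltPerm (m + 2) π) :
    π 1 < π 0 := by
  simpa using hπ 0 (by omega)

lemma card_second_ne {m : ℕ} (c d : Fin (m + 2)) (hcd : (c : ℕ) = d + 1) :
    Nat.card {π : Equiv.Perm (Fin (m + 2)) // (IsAltPerm (m + 2) π ∧ π 0 = c) ∧ ¬ π 1 = d} =
    Nat.card {π : Equiv.Perm (Fin (m + 2)) // IsAltPerm (m + 2) π ∧ π 0 = d} := by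
  refine Nat.card_congr ((Equiv.mulLeft (Equiv.swap d c)).subtypeEquiv fun π => ?_)
  have hdc : d < c := by rw [Fin.lt_def]; omega
  simp only [Equiv.coe_mulLeft, Equiv.Perm.mul_apply]
  constructor
  · rintro ⟨⟨hπ, h0⟩, h1⟩
    refine ⟨hπ.swap_mul hcd (Or.inl h0) ?_ h1, by simp [h0]⟩
    exact h0 ▸ hπ.one_lt_zero.ne
  · rintro ⟨hπ, h0⟩
    have hπ0 : π 0 = c := by
      have := congrArg (Equiv.swap d c) h0
      simpa using this
    have hlt := hπ.one_lt_zero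
    simp only [Equiv.Perm.mul_apply, hπ0, Equiv.swap_apply_right] at hlt
    have h1 : π 1 ≠ d := by
      intro h
      rw [h, Equiv.swap_apply_left] at hlt
      exact absurd hlt hdc.asymm
    have h1c : π 1 ≠ c := by
      intro h
      rw [h, Equiv.swap_apply_right] at hlt
      exact lt_irrefl _ hlt
    refine ⟨⟨?_, hπ0⟩, h1⟩
    -- The exchange is an involution, so it also recovers `π`.
    have := hπ.swap_mul hcd (Or.inr h0) (by
        simp only [Equiv.Perm.mul_apply]
        exact (hlt.trans hdc).ne) (by
        simp only [Equiv.Perm.mul_apply]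
        exact hlt.ne)
    rwa [Equiv.swap_mul_self_mul] at this

/-- The permutation `c, ι(σ̄₁), ι(σ̄₂), …`, where `σ̄` is the complement of `σ` and `ι` is the
increasing bijection onto the values other than `c`. -/
def prependCompl {m : ℕ} (c : Fin (m + 1)) (σ : Equiv.Perm (Fin m)) :
    Equiv.Perm (Fin (m + 1)) :=
  (finSuccEquiv' 0).trans ((Equiv.optionCongr (σ.trans Fin.revPerm)).trans (finSuccEquiv' c).symm)

lemma prependCompl_zero {m : ℕ} (c : Fin (m + 1)) (σ : Equiv.Perm (Fin m)) :
    prependCompl c σ 0 = c := by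
  simp [prependCompl]

lemma prependCompl_succ {m : ℕ} (c : Fin (m + 1)) (σ : Equiv.Perm (Fin m)) (i : Fin m) :
    prependCompl c σ i.succ = c.succAbove (σ i).rev := by
  have : finSuccEquiv' 0 i.succ = some i := by
    rw [← Fin.succAbove_zero_apply, finSuccEquiv'_succAbove]
  simp [prependCompl, this]

lemma prependCompl_injective {m : ℕ} (c : Fin (m + 1)) :
    Function.Injective (prependCompl c) := by
  intro σ τ h
  ext1 i
  have := congrArg (fun π => π i.succ) h
  simpa [prependCompl_succ] using this

lemma exists_prependCompl {m : ℕ} (π : Equiv.Perm (Fin (m + 1))) :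
    ∃ σ, prependCompl (π 0) σ = π := by
  have h : ∀ i : Fin m, ∃ j, (π 0).succAbove j = π i.succ := fun i =>
    Fin.exists_succAbove_eq fun h => Fin.succ_ne_zero i (π.injective h)
  choose g hg using h
  have hinj : Function.Injective g := by
    intro i j hij
    have : π i.succ = π j.succ := by rw [← hg, ← hg, hij]
    exact Fin.succ_injective _ (π.injective this)
  refine ⟨(Equiv.ofBijective g (Finite.injective_iff_bijective.mp hinj)).trans Fin.revPerm, ?_⟩
  ext1 i
  refine Fin.cases ?_ (fun i => ?_) i
  · exact prependCompl_zero _ _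
  · simp [prependCompl_succ, hg]

/-- Prepending an entry shifts the parity of positions, which the complementation undoes. -/
lemma isAltPerm_prependCompl {m : ℕ} (c : Fin (m + 2)) (σ : Equiv.Perm (Fin (m + 1))) :
    IsAltPerm (m + 2) (prependCompl c σ) ↔
      prependCompl c σ 1 < c ∧ IsAltPerm (m + 1) σ := by
  have hs : ∀ (i : ℕ) (h : i + 1 < m + 2),
      prependCompl c σ ⟨i + 1, h⟩ = c.succAbove (σ ⟨i, by omega⟩).rev :=
    fun i h => prependCompl_succ c σ ⟨i, by omega⟩
  constructor
  · intro hπ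
    refine ⟨by simpa [prependCompl_zero] using hπ.one_lt_zero, fun i h => ?_⟩
    have := hπ (i + 1) (by omega)
    rw [hs, hs, Fin.succAbove_lt_succAbove_iff, Fin.succAbove_lt_succAbove_iff, Fin.rev_lt_rev,
      Fin.rev_lt_rev] at this
    split_ifs at this ⊢
    all_goals first | exact this | omega
  · rintro ⟨h1, hσ⟩ i h
    cases i with
    | zero => simpa [prependCompl_zero] using h1
    | succ i =>
      have := hσ i (by omega)
      rw [hs, hs, Fin.succAbove_lt_succAbove_iff, Fin.succAbove_lt_succAbove_iff, Fin.rev_lt_rev,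
        Fin.rev_lt_rev]
      split_ifs at this ⊢
      all_goals first | exact this | omega

lemma card_second_eq {m : ℕ} (c d : Fin (m + 2)) (hcd : (c : ℕ) = d + 1) :
    Nat.card {π : Equiv.Perm (Fin (m + 2)) // (IsAltPerm (m + 2) π ∧ π 0 = c) ∧ π 1 = d} =
    Nat.card {σ : Equiv.Perm (Fin (m + 1)) // IsAltPerm (m + 1) σ ∧ (σ 0 : ℕ) + c = m + 1} := by
  have hval : ∀ σ : Equiv.Perm (Fin (m + 1)),
      prependCompl c σ 1 = d ↔ (σ 0 : ℕ) + c = m + 1 := by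
    intro σ
    have h1 : prependCompl c σ 1 = c.succAbove (σ 0).rev := prependCompl_succ c σ 0
    have := (σ 0).isLt
    have := c.isLt
    rw [h1, Fin.ext_iff, Fin.succAbove]
    split_ifs with h <;>
      simp only [Fin.lt_def, Fin.val_castSucc, Fin.val_succ, Fin.val_rev] at h ⊢ <;> omega
  have hdc : d < c := by rw [Fin.lt_def]; omega
  symm
  refine Nat.card_congr (Equiv.ofBijective (fun σ => ⟨prependCompl c σ.1, ?_⟩) ⟨?_, ?_⟩)
  · have h := (hval σ.1).2 σ.2.2
    exact ⟨⟨(isAltPerm_prependCompl c _).2 ⟨h ▸ hdc, σ.2.1⟩, prependCompl_zero c _⟩, h⟩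
  · intro σ τ h
    exact Subtype.ext (prependCompl_injective c (congrArg Subtype.val h))
  · rintro ⟨π, ⟨hπ, h0⟩, h1⟩
    obtain ⟨σ, hσ⟩ := exists_prependCompl π
    rw [h0] at hσ
    subst hσ
    exact ⟨⟨σ, ((isAltPerm_prependCompl c σ).1 hπ).2, (hval σ).1 h1⟩, rfl⟩

/-- For `n ≥ 2` and `2 ≤ k ≤ n`, `a_{n,k} = a_{n,k-1} + a_{n-1,n-k+1}`. -/
theorem altA_recurrence_two (n k : ℕ) (hn : 2 ≤ n) (hk2 : 2 ≤ k) (hkn : k ≤ n) :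
    altA n k = altA n (k - 1) + altA (n - 1) (n - k + 1) := by
  obtain ⟨m, rfl⟩ := Nat.exists_eq_add_of_le' hn
  obtain ⟨j, rfl⟩ := Nat.exists_eq_add_of_le' hk2
  -- Zero-based, the first entry `k = j + 2` is the value `c = j + 1`, and `k - 1` is `d = j`.
  let c : Fin (m + 2) := ⟨j + 1, by omega⟩
  let d : Fin (m + 2) := ⟨j, by omega⟩
  have hcd : (c : ℕ) = d + 1 := rfl
  have e1 : altA (m + 2) (j + 2) =
      Nat.card {π : Equiv.Perm (Fin (m + 2)) // IsAltPerm (m + 2) π ∧ π 0 = c} := by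
    refine Nat.card_congr (Equiv.subtypeEquivRight fun π => and_congr_right fun _ => ?_)
    rw [firstEntry_succ, Fin.ext_iff]
    change _ ↔ _ = j + 1
    omega
  have e2 : altA (m + 2) (j + 2 - 1) =
      Nat.card {π : Equiv.Perm (Fin (m + 2)) // IsAltPerm (m + 2) π ∧ π 0 = d} := by
    refine Nat.card_congr (Equiv.subtypeEquivRight fun π => and_congr_right fun _ => ?_)
    rw [firstEntry_succ, Fin.ext_iff]
    change _ ↔ _ = j
    omega
  have e3 : altA (m + 2 - 1) (m + 2 - (j + 2) + 1) =
      Nat.card {σ : Equiv.Perm (Fin (m + 1)) //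
        IsAltPerm (m + 1) σ ∧ (σ 0 : ℕ) + c = m + 1} := by
    refine Nat.card_congr (Equiv.subtypeEquivRight fun σ => and_congr_right fun _ => ?_)
    change firstEntry (n := m + 1) σ = _ ↔ _ + (j + 1) = _
    rw [firstEntry_succ]
    omega
  rw [e1, e2, e3, ← card_second_ne c d hcd, ← card_second_eq c d hcd]
  classical
  simp only [Nat.card_eq_fintype_card, Fintype.card_subtype]
  rw [← Finset.filter_filter _ (fun π : Equiv.Perm (Fin (m + 2)) => ¬ π 1 = d),
    ← Finset.filter_filter _ (fun π : Equiv.Perm (Fin (m + 2)) => π 1 = d),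
    Nat.add_comm (Finset.card _), Finset.card_filter_add_card_filter_not]
end
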